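/- arXiv:1509.07984 — 2 statements merged into one kernel-verified Lean document; each statement's English description precedes it below -/
import Mathlib

section
/- Let G(H₀,X₀) and G(H₁,X₁) be complementary graph subspaces of bounded linear operators X₀ : H₀ → H₁ and X₁ : H₁ → H₀, and suppose both are invariant for the block operator matrix A + V. Then the domain 𝔇 splits as 𝔇 = (𝔇 ∩ G(H₀,X₀)) + (𝔇 ∩ G(H₁,X₁)) if and only if (A − YV)(I_H − Y) ⊆ (I_H − Y)(A + V) as an extension relation, i.e. every x ∈ H with (I_H − Y)x ∈ 𝔇 satisfies x ∈ 𝔇 and (A − YV)(I_H − Y)x = (I_H − Y)(A + V)x. -/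
/-!
Write `J = diag(1, -1)`. The operator `I + Y` sends `f ⊕ g` to `(f ⊕ X₀ f) + (X₁ g ⊕ g)`, so it
turns the decomposition `H₀ ⊕ H₁` into `G(H₀,X₀) + G(H₁,X₁)`; complementarity says exactly that
it is bijective. Since `I - Y = J (I + Y) J` and `J` preserves `𝔇`, a vector `x = f ⊕ g` with
`(I - Y) x ∈ 𝔇` is the same as a vector `J x` with `(I + Y) J x ∈ 𝔇`, i.e. an element of `𝔇`
with graph components `f ⊕ X₀ f` and `-(X₁ g ⊕ g)`.

Hence the splitting of `𝔇` says that every such `x` lies in `𝔇` (`X₀ f` and `X₁ g` are then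
in the right domains automatically). The operator identity on such `x` is, componentwise, the
invariance of `G(H₁,X₁)` and of `G(H₀,X₀)` tested on `X₁ g ⊕ g` and `f ⊕ X₀ f`.
-/


noncomputable section

open Function Set

/-- A subspace `U` of `H` is *invariant* for a linear operator `T` with domain `dom ⊆ H`
if `T x ∈ U` for every `x ∈ dom ∩ U`. -/
def InvariantFor {H : Type*} [AddCommGroup H] [Module ℂ H]
    (T : H →ₗ[ℂ] H) (dom U : Submodule ℂ H) : Prop :=
  ∀ x ∈ dom, x ∈ U → T x ∈ U

variable {H₀ H₁ : Type*}
  [NormedAddCommGroup H₀] [InnerProductSpace ℂ H₀] [CompleteSpace H₀]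
  [NormedAddCommGroup H₁] [InnerProductSpace ℂ H₁] [CompleteSpace H₁]

/-- The block operator matrix `B = A + V`, `(f ⊕ g) ↦ (A₀ f + W₁ g) ⊕ (W₀ f + A₁ g)`,
as a total linear map on `H₀ × H₁`; as an unbounded operator it is considered on its
natural domain `𝔇 = 𝔇₀ ⊕ 𝔇₁` with `𝔇₀ = Dom(A₀) ∩ Dom(W₀)`, `𝔇₁ = Dom(A₁) ∩ Dom(W₁)`. -/
def blockOp (A₀ : H₀ →ₗ[ℂ] H₀) (A₁ : H₁ →ₗ[ℂ] H₁)
    (W₀ : H₀ →ₗ[ℂ] H₁) (W₁ : H₁ →ₗ[ℂ] H₀) : H₀ × H₁ →ₗ[ℂ] H₀ × H₁ :=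
  LinearMap.prod
    (A₀ ∘ₗ LinearMap.fst ℂ H₀ H₁ + W₁ ∘ₗ LinearMap.snd ℂ H₀ H₁)
    (W₀ ∘ₗ LinearMap.fst ℂ H₀ H₁ + A₁ ∘ₗ LinearMap.snd ℂ H₀ H₁)

/-- The graph subspace `G(H₀, X₀) = { f ⊕ X₀ f : f ∈ H₀ }`. -/
def graphSub0 (X₀ : H₀ →L[ℂ] H₁) : Submodule ℂ (H₀ × H₁) :=
  LinearMap.ker
    ((X₀ : H₀ →ₗ[ℂ] H₁) ∘ₗ LinearMap.fst ℂ H₀ H₁ - LinearMap.snd ℂ H₀ H₁)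

/-- The graph subspace `G(H₁, X₁) = { X₁ g ⊕ g : g ∈ H₁ }`. -/
def graphSub1 (X₁ : H₁ →L[ℂ] H₀) : Submodule ℂ (H₀ × H₁) :=
  LinearMap.ker
    ((X₁ : H₁ →ₗ[ℂ] H₀) ∘ₗ LinearMap.snd ℂ H₀ H₁ - LinearMap.fst ℂ H₀ H₁)

/-- The operator `Y(f ⊕ g) = X₁ g ⊕ X₀ f`. -/
def Yop (X₀ : H₀ →L[ℂ] H₁) (X₁ : H₁ →L[ℂ] H₀) : H₀ × H₁ →ₗ[ℂ] H₀ × H₁ :=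
  LinearMap.prod
    ((X₁ : H₁ →ₗ[ℂ] H₀) ∘ₗ LinearMap.snd ℂ H₀ H₁)
    ((X₀ : H₀ →ₗ[ℂ] H₁) ∘ₗ LinearMap.fst ℂ H₀ H₁)

/-- The block diagonal operator `A − YV`, `(f ⊕ g) ↦ (A₀ f − X₁ W₀ f) ⊕ (A₁ g − X₀ W₁ g)`. -/
def AminusYV (A₀ : H₀ →ₗ[ℂ] H₀) (A₁ : H₁ →ₗ[ℂ] H₁)
    (W₀ : H₀ →ₗ[ℂ] H₁) (W₁ : H₁ →ₗ[ℂ] H₀)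
    (X₀ : H₀ →L[ℂ] H₁) (X₁ : H₁ →L[ℂ] H₀) : H₀ × H₁ →ₗ[ℂ] H₀ × H₁ :=
  LinearMap.prod
    ((A₀ - (X₁ : H₁ →ₗ[ℂ] H₀) ∘ₗ W₀) ∘ₗ LinearMap.fst ℂ H₀ H₁)
    ((A₁ - (X₀ : H₀ →ₗ[ℂ] H₁) ∘ₗ W₁) ∘ₗ LinearMap.snd ℂ H₀ H₁)

/-- The block diagonal operator `A + VY`, `(f ⊕ g) ↦ (A₀ f + W₁ X₀ f) ⊕ (A₁ g + W₀ X₁ g)`. -/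
def AplusVY (A₀ : H₀ →ₗ[ℂ] H₀) (A₁ : H₁ →ₗ[ℂ] H₁)
    (W₀ : H₀ →ₗ[ℂ] H₁) (W₁ : H₁ →ₗ[ℂ] H₀)
    (X₀ : H₀ →L[ℂ] H₁) (X₁ : H₁ →L[ℂ] H₀) : H₀ × H₁ →ₗ[ℂ] H₀ × H₁ :=
  LinearMap.prod
    ((A₀ + W₁ ∘ₗ (X₀ : H₀ →ₗ[ℂ] H₁)) ∘ₗ LinearMap.fst ℂ H₀ H₁)
    ((A₁ + W₀ ∘ₗ (X₁ : H₁ →ₗ[ℂ] H₀)) ∘ₗ LinearMap.snd ℂ H₀ H₁)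

theorem mem_graphSub0_iff (X₀ : H₀ →L[ℂ] H₁) (x : H₀ × H₁) :
    x ∈ graphSub0 X₀ ↔ X₀ x.1 = x.2 := by
  simp [graphSub0, sub_eq_zero]

theorem mem_graphSub1_iff (X₁ : H₁ →L[ℂ] H₀) (x : H₀ × H₁) :
    x ∈ graphSub1 X₁ ↔ X₁ x.2 = x.1 := by
  simp [graphSub1, sub_eq_zero]

/-- Uniqueness of the graph decomposition, that is, injectivity of `I + Y`. -/
theorem eq_zero_of_graph_inf_eq_bot {X₀ : H₀ →L[ℂ] H₁} {X₁ : H₁ →L[ℂ] H₀}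
    (hdisj : graphSub0 X₀ ⊓ graphSub1 X₁ = ⊥) {f : H₀} {g : H₁}
    (h0 : f + X₁ g = 0) (h1 : X₀ f + g = 0) : f = 0 ∧ g = 0 := by
  have hm : (f, X₀ f) ∈ graphSub0 X₀ ⊓ graphSub1 X₁ := by
    refine ⟨(mem_graphSub0_iff _ _).2 rfl, (mem_graphSub1_iff _ _).2 ?_⟩
    change X₁ (X₀ f) = f
    rw [eq_neg_of_add_eq_zero_left h1, map_neg, eq_neg_of_add_eq_zero_left h0]
  rw [hdisj, Submodule.mem_bot] at hm
  have hf : f = 0 := congrArg Prod.fst hm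
  subst hf
  exact ⟨rfl, by simpa using h1⟩

/-- Proposition, part (a). Let `G(H₀, X₀)` and `G(H₁, X₁)` be complementary
graph subspaces, both invariant for the block operator matrix `A + V` with natural domain `𝔇`.
Then `𝔇` splits as `𝔇 = (𝔇 ∩ G(H₀,X₀)) + (𝔇 ∩ G(H₁,X₁))` if and only if
`(A − YV)(I_H − Y) ⊆ (I_H − Y)(A + V)`, i.e. every `x` with `(I_H − Y)x ∈ 𝔇` satisfies
`x ∈ 𝔇` and `(A − YV)(I_H − Y)x = (I_H − Y)(A + V)x`. -/
theorem domain_splits_iff_extension_relation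
    (A₀ : H₀ →ₗ[ℂ] H₀) (DA₀ : Submodule ℂ H₀) (A₁ : H₁ →ₗ[ℂ] H₁) (DA₁ : Submodule ℂ H₁)
    (W₀ : H₀ →ₗ[ℂ] H₁) (DW₀ : Submodule ℂ H₀) (W₁ : H₁ →ₗ[ℂ] H₀) (DW₁ : Submodule ℂ H₁)
    (X₀ : H₀ →L[ℂ] H₁) (X₁ : H₁ →L[ℂ] H₀)
    (hsum : graphSub0 X₀ ⊔ graphSub1 X₁ = ⊤)
    (hdisj : graphSub0 X₀ ⊓ graphSub1 X₁ = ⊥)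
    (hinv0 : InvariantFor (blockOp A₀ A₁ W₀ W₁) ((DA₀ ⊓ DW₀).prod (DA₁ ⊓ DW₁)) (graphSub0 X₀))
    (hinv1 : InvariantFor (blockOp A₀ A₁ W₀ W₁) ((DA₀ ⊓ DW₀).prod (DA₁ ⊓ DW₁)) (graphSub1 X₁)) :
    ((DA₀ ⊓ DW₀).prod (DA₁ ⊓ DW₁) =
        (DA₀ ⊓ DW₀).prod (DA₁ ⊓ DW₁) ⊓ graphSub0 X₀ ⊔
          (DA₀ ⊓ DW₀).prod (DA₁ ⊓ DW₁) ⊓ graphSub1 X₁) ↔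
      ∀ x : H₀ × H₁, x - Yop X₀ X₁ x ∈ (DA₀ ⊓ DW₀).prod (DA₁ ⊓ DW₁) →
        x ∈ (DA₀ ⊓ DW₀).prod (DA₁ ⊓ DW₁) ∧
          AminusYV A₀ A₁ W₀ W₁ X₀ X₁ (x - Yop X₀ X₁ x) =
            blockOp A₀ A₁ W₀ W₁ x - Yop X₀ X₁ (blockOp A₀ A₁ W₀ W₁ x) := by
  constructor
  · rintro hsplit ⟨f, g⟩ ⟨hf, hg⟩
    change f - X₁ g ∈ DA₀ ⊓ DW₀ at hf
    change g - X₀ f ∈ DA₁ ⊓ DW₁ at hg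
    -- The vector `J (I - Y) x` lies in `𝔇`, so it splits inside `𝔇`.
    have hz : (f - X₁ g, -(g - X₀ f)) ∈ (DA₀ ⊓ DW₀).prod (DA₁ ⊓ DW₁) :=
      ⟨hf, neg_mem hg⟩
    rw [hsplit] at hz
    obtain ⟨⟨f', k⟩, ⟨⟨hf', hk⟩, h0⟩, ⟨l, g'⟩, ⟨⟨hl, hg'⟩, h1⟩, hsum'⟩ :=
      Submodule.mem_sup.1 hz
    replace h0 := (mem_graphSub0_iff _ _).1 h0
    replace h1 := (mem_graphSub1_iff _ _).1 h1
    dsimp only at h0 h1 hf' hk hl hg'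
    subst h0 h1
    have e0 : f' + X₁ g' = f - X₁ g := congrArg Prod.fst hsum'
    have e1 : X₀ f' + g' = -(g - X₀ f) := congrArg Prod.snd hsum'
    obtain ⟨r0, r1⟩ := eq_zero_of_graph_inf_eq_bot hdisj (f := f' - f) (g := g' + g)
      (by rw [map_add]; linear_combination (norm := module) e0)
      (by rw [map_sub]; linear_combination (norm := module) e1)
    obtain rfl := sub_eq_zero.1 r0
    obtain rfl := eq_neg_of_add_eq_zero_left r1
    have hgD : g ∈ DA₁ ⊓ DW₁ := by simpa using neg_mem hg'
    have hlD : X₁ g ∈ DA₀ ⊓ DW₀ := by simpa using neg_mem hl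
    have i0 : X₀ (A₀ f' + W₁ (X₀ f')) = W₀ f' + A₁ (X₀ f') := (mem_graphSub0_iff _ _).1
      (hinv0 (f', X₀ f') ⟨hf', hk⟩ ((mem_graphSub0_iff _ _).2 rfl))
    have i1 : X₁ (W₀ (X₁ g) + A₁ g) = A₀ (X₁ g) + W₁ g := (mem_graphSub1_iff _ _).1
      (hinv1 (X₁ g, g) ⟨hlD, hgD⟩ ((mem_graphSub1_iff _ _).2 rfl))
    rw [map_add] at i0 i1
    refine ⟨⟨hf', hgD⟩, Prod.ext ?_ ?_⟩
    · change A₀ (f' - X₁ g) - X₁ (W₀ (f' - X₁ g)) = A₀ f' + W₁ g - X₁ (W₀ f' + A₁ g)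
      simp only [map_add, map_sub]
      linear_combination (norm := module) i1
    · change A₁ (g - X₀ f') - X₀ (W₁ (g - X₀ f')) = W₀ f' + A₁ g - X₀ (A₀ f' + W₁ g)
      simp only [map_add, map_sub]
      linear_combination (norm := module) i0
  · intro h
    refine le_antisymm ?_ (sup_le inf_le_left inf_le_left)
    intro z hz
    have hzt : z ∈ graphSub0 X₀ ⊔ graphSub1 X₁ := hsum ▸ Submodule.mem_top
    obtain ⟨⟨f, k⟩, h0, ⟨l, g⟩, h1, rfl⟩ := Submodule.mem_sup.1 hzt
    have e0 := (mem_graphSub0_iff _ _).1 h0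
    have e1 := (mem_graphSub1_iff _ _).1 h1
    dsimp only at e0 e1
    subst e0 e1
    obtain ⟨hz0, hz1⟩ := hz
    change f + X₁ g ∈ DA₀ ⊓ DW₀ at hz0
    change X₀ f + g ∈ DA₁ ⊓ DW₁ at hz1
    -- `x = J (f ⊕ g)` satisfies `(I - Y) x = J z ∈ 𝔇`.
    obtain ⟨⟨hf, hg⟩, -⟩ := h (f, -g) (by
      constructor
      · change f - X₁ (-g) ∈ DA₀ ⊓ DW₀
        simpa using hz0
      · change -g - X₀ f ∈ DA₁ ⊓ DW₁
        rw [← neg_mem_iff]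
        convert hz1 using 1
        abel)
    change f ∈ DA₀ ⊓ DW₀ at hf
    replace hg : g ∈ DA₁ ⊓ DW₁ := neg_mem_iff.1 hg
    exact Submodule.add_mem_sup
      ⟨⟨hf, (Submodule.add_mem_iff_left _ hg).1 hz1⟩, h0⟩
      ⟨⟨(Submodule.add_mem_iff_right _ hf).1 hz0, hg⟩, h1⟩
end
end

section
/- Let G(H₀,X₀) and G(H₁,X₁) be complementary graph subspaces of bounded linear operators X₀ : H₀ → H₁ and X₁ : H₁ → H₀, and suppose both are invariant for the block operator matrix B = A + V. Assume there is a complex number λ such that both B − λ : 𝔇 → H and (A − YV) − λ : 𝔇 → H are bijective. Then the following are equivalent: (i) the domain splits, 𝔇 = (𝔇 ∩ G(H₀,X₀)) + (𝔇 ∩ G(H₁,X₁)); (ii) both G(H₀,X₀) and G(H₁,X₁) are invariant for the inverse (B − λ)⁻¹ : H → H; (iii) the domain 𝔇 is invariant for X₀ and X₁, i.e. X₀ maps 𝔇₀ into 𝔇₁ and X₁ maps 𝔇₁ into 𝔇₀. -/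
/-!
Write `Y (f ⊕ g) = X₁ g ⊕ X₀ f` and `𝔇' = {x ∈ 𝔇 : Y x ∈ 𝔇}`. The graph subspaces are complementary
exactly when `I + Y` is bijective, and conjugating with `f ⊕ g ↦ f ⊕ (-g)` shows that `I - Y` is
then bijective too.

The equivalence of splitting and resolvent invariance is the usual argument: invariance makes
`B - λ` compatible with the decomposition of `H`, and its bijectivity transfers the decomposition
between `𝔇` and `H`.

For the angular operators, invariance of both graphs gives the intertwining relation
`(A - YV - λ)(I - Y) = (I - Y)(B - λ)` on `𝔇'` (`intertwine`). The domain splits iff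
`𝔇 ⊆ (I + Y) 𝔇'` (`splits_iff`), equivalently, after conjugation, `𝔇 ⊆ (I - Y) 𝔇'`.
* If the domain splits, the left side of the relation maps `𝔇'` onto `H`, hence `B - λ` maps `𝔇'`
  onto `H`; since `B - λ` is injective on `𝔇`, this forces `𝔇' = 𝔇`.
* If `𝔇' = 𝔇`, the right side maps `𝔇` onto `H`, and injectivity of `A - YV - λ` on `𝔇` gives
  `𝔇 ⊆ (I - Y) 𝔇`.
-/

noncomputable section

open Function Set

variable {H₀ H₁ : Type*}
  [NormedAddCommGroup H₀] [InnerProductSpace ℂ H₀] [CompleteSpace H₀]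
  [NormedAddCommGroup H₁] [InnerProductSpace ℂ H₁] [CompleteSpace H₁]

theorem mem_graphSub0 {X₀ : H₀ →L[ℂ] H₁} {x : H₀ × H₁} : x ∈ graphSub0 X₀ ↔ X₀ x.1 = x.2 := by
  simp [graphSub0, sub_eq_zero]

theorem mem_graphSub1 {X₁ : H₁ →L[ℂ] H₀} {x : H₀ × H₁} : x ∈ graphSub1 X₁ ↔ X₁ x.2 = x.1 := by
  simp [graphSub1, sub_eq_zero]

/-- The map `I - Y` is onto when the graph subspaces span: `I + Y` is onto, and the sign change in
the second component turns `I + Y` into `I - Y`. -/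
theorem exists_sub_eq {X₀ : H₀ →L[ℂ] H₁} {X₁ : H₁ →L[ℂ] H₀}
    (hsum : graphSub0 X₀ ⊔ graphSub1 X₁ = ⊤) (p : H₀) (q : H₁) :
    ∃ a b, a - X₁ b = p ∧ b - X₀ a = q := by
  have h : (p, -q) ∈ graphSub0 X₀ ⊔ graphSub1 X₁ := hsum ▸ Submodule.mem_top
  obtain ⟨u, hu, v, hv, huv⟩ := Submodule.mem_sup.1 h
  rw [mem_graphSub0] at hu
  rw [mem_graphSub1] at hv
  have h1 := congrArg Prod.fst huv
  have h2 := congrArg Prod.snd huv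
  simp only [Prod.fst_add, Prod.snd_add] at h1 h2
  refine ⟨u.1, -v.2, ?_, ?_⟩
  · rw [map_neg, hv, ← h1]; abel
  · rw [hu, ← neg_eq_iff_eq_neg.2 h2]; abel

/-- The map `I - Y` is injective when the graph subspaces intersect trivially, because its kernel is
that intersection. -/
theorem sub_inj {X₀ : H₀ →L[ℂ] H₁} {X₁ : H₁ →L[ℂ] H₀}
    (hdisj : graphSub0 X₀ ⊓ graphSub1 X₁ = ⊥) {a a' : H₀} {b b' : H₁}
    (h1 : a - X₁ b = a' - X₁ b') (h2 : b - X₀ a = b' - X₀ a') : a = a' ∧ b = b' := by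
  have h : (a - a', b - b') ∈ graphSub0 X₀ ⊓ graphSub1 X₁ := by
    refine ⟨mem_graphSub0.2 ?_, mem_graphSub1.2 ?_⟩
    · simp only [map_sub]; linear_combination (norm := module) -h2
    · simp only [map_sub]; linear_combination (norm := module) -h1
  rw [hdisj, Submodule.mem_bot, Prod.mk_eq_zero, sub_eq_zero, sub_eq_zero] at h
  exact h

/-- The domain `D₀ ⊕ D₁` splits along the graph subspaces iff each of its elements is `(I - Y)(a ⊕ b)`
for some `a ⊕ b` which lies in the domain together with `Y (a ⊕ b)`. -/
theorem splits_iff {X₀ : H₀ →L[ℂ] H₁} {X₁ : H₁ →L[ℂ] H₀}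
    {D₀ : Submodule ℂ H₀} {D₁ : Submodule ℂ H₁} :
    (D₀.prod D₁ = D₀.prod D₁ ⊓ graphSub0 X₀ ⊔ D₀.prod D₁ ⊓ graphSub1 X₁) ↔
      ∀ p ∈ D₀, ∀ q ∈ D₁, ∃ a ∈ D₀, ∃ b ∈ D₁, X₀ a ∈ D₁ ∧ X₁ b ∈ D₀ ∧
        a - X₁ b = p ∧ b - X₀ a = q := by
  constructor
  · intro h p hp q hq
    have hx : (p, -q) ∈ D₀.prod D₁ := ⟨hp, D₁.neg_mem hq⟩
    rw [h] at hx
    obtain ⟨u, ⟨hu, hu'⟩, v, ⟨hv, hv'⟩, huv⟩ := Submodule.mem_sup.1 hx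
    have hu' := mem_graphSub0.1 hu'
    have hv' := mem_graphSub1.1 hv'
    have h1 := congrArg Prod.fst huv
    have h2 := congrArg Prod.snd huv
    simp only [Prod.fst_add, Prod.snd_add] at h1 h2
    refine ⟨u.1, hu.1, -v.2, D₁.neg_mem hv.2, hu' ▸ hu.2, ?_, ?_, ?_⟩
    · rw [map_neg, hv']; exact D₀.neg_mem hv.1
    · rw [map_neg, hv', ← h1]; abel
    · rw [hu', ← neg_eq_iff_eq_neg.2 h2]; abel
  · intro h
    refine le_antisymm ?_ (sup_le inf_le_left inf_le_left)
    rintro ⟨p, q⟩ ⟨hp, hq⟩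
    obtain ⟨a, ha, b, hb, hXa, hXb, h1, h2⟩ := h p hp (-q) (D₁.neg_mem hq)
    refine Submodule.mem_sup.2 ⟨(a, X₀ a), ⟨⟨ha, hXa⟩, mem_graphSub0.2 rfl⟩,
      (-X₁ b, -b), ⟨⟨D₀.neg_mem hXb, D₁.neg_mem hb⟩, mem_graphSub1.2 (map_neg _ _)⟩, ?_⟩
    refine Prod.ext ?_ ?_
    · rw [← h1]; exact (sub_eq_add_neg _ _).symm
    · rw [← neg_eq_iff_eq_neg.2 h2]; change X₀ a + -b = _; rw [neg_sub, sub_eq_add_neg]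

/-- The relation `(A - YV - lam)(I - Y) = (I - Y)(B - lam)` at a vector `f ⊕ g` of the domain which `Y`
maps back into the domain. -/
theorem intertwine {A₀ : H₀ →ₗ[ℂ] H₀} {A₁ : H₁ →ₗ[ℂ] H₁} {W₀ : H₀ →ₗ[ℂ] H₁} {W₁ : H₁ →ₗ[ℂ] H₀}
    {X₀ : H₀ →L[ℂ] H₁} {X₁ : H₁ →L[ℂ] H₀} {D₀ : Submodule ℂ H₀} {D₁ : Submodule ℂ H₁}
    (hinv0 : InvariantFor (blockOp A₀ A₁ W₀ W₁) (D₀.prod D₁) (graphSub0 X₀))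
    (hinv1 : InvariantFor (blockOp A₀ A₁ W₀ W₁) (D₀.prod D₁) (graphSub1 X₁))
    (lam : ℂ) {f : H₀} {g : H₁} (hf : f ∈ D₀) (hg : g ∈ D₁) (hXf : X₀ f ∈ D₁) (hXg : X₁ g ∈ D₀) :
    AminusYV A₀ A₁ W₀ W₁ X₀ X₁ (f - X₁ g, g - X₀ f) - lam • (f - X₁ g, g - X₀ f) =
      ((blockOp A₀ A₁ W₀ W₁ (f, g) - lam • (f, g)).1 -
          X₁ (blockOp A₀ A₁ W₀ W₁ (f, g) - lam • (f, g)).2,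
        (blockOp A₀ A₁ W₀ W₁ (f, g) - lam • (f, g)).2 -
          X₀ (blockOp A₀ A₁ W₀ W₁ (f, g) - lam • (f, g)).1) := by
  have e0 := mem_graphSub0.1 (hinv0 (f, X₀ f) ⟨hf, hXf⟩ (mem_graphSub0.2 rfl))
  have e1 := mem_graphSub1.1 (hinv1 (X₁ g, g) ⟨hXg, hg⟩ (mem_graphSub1.2 rfl))
  simp [blockOp] at e0 e1
  refine Prod.ext ?_ ?_
  · simp [blockOp, AminusYV, smul_sub]
    linear_combination (norm := module) e1
  · simp [blockOp, AminusYV, smul_sub]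
    linear_combination (norm := module) e0

/-- Theorem, main result. Let `G(H₀, X₀)` and `G(H₁, X₁)` be complementary
graph subspaces, both invariant for `B = A + V` with natural domain `𝔇`, and let `lam` be a
complex number such that both `B − lam : 𝔇 → H` and `(A − YV) − lam : 𝔇 → H` are bijective,
the (everywhere defined) inverse of the former being `R = (B − lam)⁻¹ : H → H`.  Then the
following are equivalent:
(i) `𝔇 = (𝔇 ∩ G(H₀,X₀)) + (𝔇 ∩ G(H₁,X₁))`;
(ii) `G(H₀,X₀)` and `G(H₁,X₁)` are invariant for `(B − lam)⁻¹`;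
(iii) `𝔇` is invariant for the angular operators `X₀` and `X₁`. -/
theorem main_theorem_splitting_resolvent_angular
    (A₀ : H₀ →ₗ[ℂ] H₀) (DA₀ : Submodule ℂ H₀) (A₁ : H₁ →ₗ[ℂ] H₁) (DA₁ : Submodule ℂ H₁)
    (W₀ : H₀ →ₗ[ℂ] H₁) (DW₀ : Submodule ℂ H₀) (W₁ : H₁ →ₗ[ℂ] H₀) (DW₁ : Submodule ℂ H₁)
    (X₀ : H₀ →L[ℂ] H₁) (X₁ : H₁ →L[ℂ] H₀)
    (hsum : graphSub0 X₀ ⊔ graphSub1 X₁ = ⊤)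
    (hdisj : graphSub0 X₀ ⊓ graphSub1 X₁ = ⊥)
    (hinv0 : InvariantFor (blockOp A₀ A₁ W₀ W₁) ((DA₀ ⊓ DW₀).prod (DA₁ ⊓ DW₁)) (graphSub0 X₀))
    (hinv1 : InvariantFor (blockOp A₀ A₁ W₀ W₁) ((DA₀ ⊓ DW₀).prod (DA₁ ⊓ DW₁)) (graphSub1 X₁))
    (lam : ℂ)
    (hbijB : Function.Bijective fun x : (DA₀ ⊓ DW₀).prod (DA₁ ⊓ DW₁) =>
      blockOp A₀ A₁ W₀ W₁ (x : H₀ × H₁) - lam • (x : H₀ × H₁))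
    (hbijD : Function.Bijective fun x : (DA₀ ⊓ DW₀).prod (DA₁ ⊓ DW₁) =>
      AminusYV A₀ A₁ W₀ W₁ X₀ X₁ (x : H₀ × H₁) - lam • (x : H₀ × H₁))
    (R : H₀ × H₁ → H₀ × H₁)
    (hR : ∀ y : H₀ × H₁, R y ∈ (DA₀ ⊓ DW₀).prod (DA₁ ⊓ DW₁) ∧
      blockOp A₀ A₁ W₀ W₁ (R y) - lam • R y = y) :
    (((DA₀ ⊓ DW₀).prod (DA₁ ⊓ DW₁) =
        (DA₀ ⊓ DW₀).prod (DA₁ ⊓ DW₁) ⊓ graphSub0 X₀ ⊔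
          (DA₀ ⊓ DW₀).prod (DA₁ ⊓ DW₁) ⊓ graphSub1 X₁) ↔
      ((∀ y ∈ graphSub0 X₀, R y ∈ graphSub0 X₀) ∧ ∀ y ∈ graphSub1 X₁, R y ∈ graphSub1 X₁)) ∧
    (((DA₀ ⊓ DW₀).prod (DA₁ ⊓ DW₁) =
        (DA₀ ⊓ DW₀).prod (DA₁ ⊓ DW₁) ⊓ graphSub0 X₀ ⊔
          (DA₀ ⊓ DW₀).prod (DA₁ ⊓ DW₁) ⊓ graphSub1 X₁) ↔
      ((∀ f ∈ DA₀ ⊓ DW₀, X₀ f ∈ DA₁ ⊓ DW₁) ∧ ∀ g ∈ DA₁ ⊓ DW₁, X₁ g ∈ DA₀ ⊓ DW₀)) := by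
  generalize DA₀ ⊓ DW₀ = D₀ at *
  generalize DA₁ ⊓ DW₁ = D₁ at *
  have injB : ∀ x ∈ D₀.prod D₁, ∀ y ∈ D₀.prod D₁,
      blockOp A₀ A₁ W₀ W₁ x - lam • x = blockOp A₀ A₁ W₀ W₁ y - lam • y → x = y :=
    fun x hx y hy h => congrArg Subtype.val (@hbijB.1 ⟨x, hx⟩ ⟨y, hy⟩ h)
  have injD : ∀ x ∈ D₀.prod D₁, ∀ y ∈ D₀.prod D₁,
      AminusYV A₀ A₁ W₀ W₁ X₀ X₁ x - lam • x = AminusYV A₀ A₁ W₀ W₁ X₀ X₁ y - lam • y → x = y :=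
    fun x hx y hy h => congrArg Subtype.val (@hbijD.1 ⟨x, hx⟩ ⟨y, hy⟩ h)
  have inv0 : ∀ x ∈ D₀.prod D₁, x ∈ graphSub0 X₀ →
      blockOp A₀ A₁ W₀ W₁ x - lam • x ∈ graphSub0 X₀ := fun x hx h =>
    Submodule.sub_mem _ (hinv0 x hx h) (Submodule.smul_mem _ _ h)
  have inv1 : ∀ x ∈ D₀.prod D₁, x ∈ graphSub1 X₁ →
      blockOp A₀ A₁ W₀ W₁ x - lam • x ∈ graphSub1 X₁ := fun x hx h =>
    Submodule.sub_mem _ (hinv1 x hx h) (Submodule.smul_mem _ _ h)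
  have addB : ∀ x y, blockOp A₀ A₁ W₀ W₁ (x + y) - lam • (x + y) =
      (blockOp A₀ A₁ W₀ W₁ x - lam • x) + (blockOp A₀ A₁ W₀ W₁ y - lam • y) := fun x y => by
    rw [map_add, smul_add]; abel
  have disj : ∀ x, x ∈ graphSub0 X₀ → x ∈ graphSub1 X₁ → x = 0 := fun x h0 h1 =>
    (Submodule.mem_bot ℂ).1 (hdisj ▸ (⟨h0, h1⟩ : x ∈ graphSub0 X₀ ⊓ graphSub1 X₁))
  have kerB : ∀ x ∈ D₀.prod D₁, blockOp A₀ A₁ W₀ W₁ x - lam • x = 0 → x = 0 := fun x hx h =>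
    injB x hx 0 (Submodule.zero_mem _) (by rw [h]; simp)
  refine ⟨⟨fun h => ⟨fun y hy => ?_, fun y hy => ?_⟩, fun ⟨h0, h1⟩ => ?_⟩, ?_⟩
  · obtain ⟨hD, hy'⟩ := hR y
    rw [h] at hD
    obtain ⟨u, ⟨hu, hu'⟩, v, ⟨hv, hv'⟩, huv⟩ := Submodule.mem_sup.1 hD
    rw [← huv, addB] at hy'
    have hv0 : v = 0 := kerB v hv <| disj _
      (by rw [eq_sub_of_add_eq' hy']; exact Submodule.sub_mem _ hy (inv0 u hu hu')) (inv1 v hv hv')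
    rw [← huv, hv0, add_zero]
    exact hu'
  · obtain ⟨hD, hy'⟩ := hR y
    rw [h] at hD
    obtain ⟨u, ⟨hu, hu'⟩, v, ⟨hv, hv'⟩, huv⟩ := Submodule.mem_sup.1 hD
    rw [← huv, addB] at hy'
    have hu0 : u = 0 := kerB u hu <| disj _ (inv0 u hu hu')
      (by rw [eq_sub_of_add_eq hy']; exact Submodule.sub_mem _ hy (inv1 v hv hv'))
    rw [← huv, hu0, zero_add]
    exact hv'
  · refine le_antisymm (fun x hx => ?_) (sup_le inf_le_left inf_le_left)
    have ht : blockOp A₀ A₁ W₀ W₁ x - lam • x ∈ graphSub0 X₀ ⊔ graphSub1 X₁ :=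
      hsum ▸ Submodule.mem_top
    obtain ⟨u, hu, v, hv, huv⟩ := Submodule.mem_sup.1 ht
    refine Submodule.mem_sup.2 ⟨R u, ⟨(hR u).1, h0 u hu⟩, R v, ⟨(hR v).1, h1 v hv⟩, ?_⟩
    refine injB _ (Submodule.add_mem _ (hR u).1 (hR v).1) x hx ?_
    rw [addB, (hR u).2, (hR v).2, huv]
  · rw [splits_iff]
    constructor
    · intro h
      have key : ∀ f ∈ D₀, ∀ g ∈ D₁, X₀ f ∈ D₁ ∧ X₁ g ∈ D₀ := by
        intro f hf g hg
        obtain ⟨y, hy⟩ : ∃ y, y = blockOp A₀ A₁ W₀ W₁ (f, g) - lam • (f, g) := ⟨_, rfl⟩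
        -- solve `(A - YV - lam) d = (I - Y) y` in the domain and write `d = (I - Y)(a ⊕ b)`
        obtain ⟨⟨⟨p, q⟩, hp, hq⟩, hd⟩ := hbijD.2 (y.1 - X₁ y.2, y.2 - X₀ y.1)
        obtain ⟨a, ha, b, hb, hXa, hXb, rfl, rfl⟩ := h p hp q hq
        have hd := (intertwine hinv0 hinv1 lam ha hb hXa hXb).symm.trans hd
        obtain ⟨e1, e2⟩ := sub_inj hdisj (congrArg Prod.fst hd) (congrArg Prod.snd hd)
        have e := injB (a, b) ⟨ha, hb⟩ (f, g) ⟨hf, hg⟩ ((Prod.ext e1 e2).trans hy)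
        obtain ⟨rfl, rfl⟩ := Prod.mk.inj e
        exact ⟨hXa, hXb⟩
      exact ⟨fun f hf => (key f hf 0 D₁.zero_mem).1, fun g hg => (key 0 D₀.zero_mem g hg).2⟩
    · rintro ⟨hX₀, hX₁⟩ p hp q hq
      -- solve `(I - Y) u = (A - YV - lam)(p ⊕ q)`, then `(B - lam)(a ⊕ b) = u`
      obtain ⟨u₀, u₁, h0, h1⟩ := exists_sub_eq hsum
        (AminusYV A₀ A₁ W₀ W₁ X₀ X₁ (p, q) - lam • (p, q)).1
        (AminusYV A₀ A₁ W₀ W₁ X₀ X₁ (p, q) - lam • (p, q)).2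
      obtain ⟨⟨⟨a, b⟩, ha, hb⟩, hab⟩ := hbijB.2 (u₀, u₁)
      have hab : blockOp A₀ A₁ W₀ W₁ (a, b) - lam • (a, b) = (u₀, u₁) := hab
      have ha : a ∈ D₀ := ha
      have hb : b ∈ D₁ := hb
      have hi := intertwine hinv0 hinv1 lam ha hb (hX₀ a ha) (hX₁ b hb)
      rw [hab] at hi
      have e := injD (a - X₁ b, b - X₀ a)
        ⟨D₀.sub_mem ha (hX₁ b hb), D₁.sub_mem hb (hX₀ a ha)⟩ (p, q) ⟨hp, hq⟩
        (hi.trans (Prod.ext h0 h1))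
      obtain ⟨e1, e2⟩ := Prod.mk.inj e
      exact ⟨a, ha, b, hb, hX₀ a ha, hX₁ b hb, e1, e2⟩
end
end
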